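/- arXiv:2111.00371 — 5 statements merged into one kernel-verified Lean document; each statement's English description precedes it below -/
import Mathlib

section
/- Let (A, μ, α, β) be a unitary BiHom-associative algebra, and let ψ, ω : A → A be linear maps with ψ(ab) = ψ(a)ψ(b), ω(ab) = ω(a)ω(b), ψ(1_A) = ω(1_A) = 1_A, such that α, β, ψ, ω are bijective and pairwise commuting. Suppose (r, s) is an associative BiHom-Yang-Baxter pair of weight (λ, γ) in (A, μ, α, β) such that r and s are each α-, β-, ψ-, and ω-invariant. Define R, S : A → A by R(a) = β²ψ(r¹)·(α⁻¹β⁻¹(a)·αω(r²)) and S(a) = β²ψ(s¹)·(α⁻¹β⁻¹(a)·αω(s²)), and ξ, ζ : A⊗A → A by ξ(a⊗b) = λR(ab), ζ(a⊗b) = γS(ab). Then (A, R, S, α, β, ξ, ζ) is a double curved Rota-Baxter BiHom-system. -/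
open TensorProduct

section Defs

variable {K A : Type*} [Field K] [NonUnitalNonAssocRing A] [Module K A]
  [SMulCommClass K A A] [IsScalarTower K A A]

/-- `r₁₂s₂₃ = α(r¹) ⊗ r²s¹ ⊗ β(s²)`, as a linear map on `(A⊗A)⊗(A⊗A)`. -/
noncomputable def m1223 (α β : A →ₗ[K] A) :
    (A ⊗[K] A) ⊗[K] (A ⊗[K] A) →ₗ[K] A ⊗[K] (A ⊗[K] A) :=
  TensorProduct.map α (TensorProduct.map (LinearMap.mul' K A) β) ∘ₗ
    TensorProduct.map LinearMap.id (TensorProduct.assoc K A A A).symm.toLinearMap ∘ₗ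
    (TensorProduct.assoc K A A (A ⊗[K] A)).toLinearMap

/-- `r₁₃s₁₂ = ω(r¹)s¹ ⊗ β(s²) ⊗ αψ(r²)`. -/
noncomputable def m1312 (α β ψ ω : A →ₗ[K] A) :
    (A ⊗[K] A) ⊗[K] (A ⊗[K] A) →ₗ[K] A ⊗[K] (A ⊗[K] A) :=
  TensorProduct.map (LinearMap.mul' K A ∘ₗ TensorProduct.map ω LinearMap.id)
      ((TensorProduct.comm K A A).toLinearMap ∘ₗ TensorProduct.map (α ∘ₗ ψ) β) ∘ₗ
    (TensorProduct.tensorTensorTensorComm K A A A A).toLinearMap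

/-- `r₂₃s₁₃ = βω(s¹) ⊗ α(r¹) ⊗ r²ψ(s²)`. -/
noncomputable def m2313 (α β ψ ω : A →ₗ[K] A) :
    (A ⊗[K] A) ⊗[K] (A ⊗[K] A) →ₗ[K] A ⊗[K] (A ⊗[K] A) :=
  (TensorProduct.assoc K A A A).toLinearMap ∘ₗ
    TensorProduct.map ((TensorProduct.comm K A A).toLinearMap ∘ₗ TensorProduct.map α (β ∘ₗ ω))
      (LinearMap.mul' K A ∘ₗ TensorProduct.map LinearMap.id ψ) ∘ₗ
    (TensorProduct.tensorTensorTensorComm K A A A A).toLinearMap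

/-- `r₁₃ = ω(r¹) ⊗ 1 ⊗ ψ(r²)` (unitary case, with unit `e`). -/
noncomputable def t13 (ψ ω : A →ₗ[K] A) (e : A) :
    A ⊗[K] A →ₗ[K] A ⊗[K] (A ⊗[K] A) :=
  TensorProduct.map ω (TensorProduct.mk K A A e ∘ₗ ψ)

/-- The operator `a ↦ β²ψ(r¹)·(α⁻¹β⁻¹(a)·αω(r²))` attached to `r ∈ A⊗A`. -/
noncomputable def rbOp (α β ψ ω : A ≃ₗ[K] A) (r : A ⊗[K] A) (a : A) : A :=
  LinearMap.mul' K A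
    (TensorProduct.map ((β.toLinearMap ∘ₗ β.toLinearMap) ∘ₗ ψ.toLinearMap)
      (LinearMap.mulLeft K (α.symm (β.symm a)) ∘ₗ (α.toLinearMap ∘ₗ ω.toLinearMap)) r)

end Defs


section Core

variable {K A : Type*} [Field K] [NonUnitalNonAssocRing A] [Module K A]
  [SMulCommClass K A A] [IsScalarTower K A A]

/-- `u ⊗ w ↦ (x ↦ ψ(u) ∘ (x ∘ ω(w)))` for a bilinear operation `m`. -/
noncomputable def coreOp (m : A →ₗ[K] A →ₗ[K] A) (ψ ω : A →ₗ[K] A) (x : A) :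
    A ⊗[K] A →ₗ[K] A :=
  TensorProduct.lift ((m.compl₂ (m x ∘ₗ ω)) ∘ₗ ψ)

/-- `u ⊗ v ⊗ w ↦ ψψ(u) ∘ x ∘ ψω(v) ∘ y ∘ ωω(w)`. -/
noncomputable def corePhi (m : A →ₗ[K] A →ₗ[K] A) (ψ ω : A →ₗ[K] A) (x y : A) :
    A ⊗[K] (A ⊗[K] A) →ₗ[K] A :=
  TensorProduct.lift ((m.compl₂ (TensorProduct.lift
    (((m.compl₂ (m y ∘ₗ ω ∘ₗ ω)) ∘ₗ (ψ ∘ₗ ω)).compr₂ (m x)))) ∘ₗ (ψ ∘ₗ ψ))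

theorem core_rel (m : A →ₗ[K] A →ₗ[K] A) (α β ψ ω : A →ₗ[K] A) (e : A) (p r s : A ⊗[K] A)
    (lam : K)
    (hm : ∀ a b, a * b = m (α a) (β b))
    (hassoc : ∀ a b c, m (m a b) c = m a (m b c))
    (hψm : ∀ a b, ψ (m a b) = m (ψ a) (ψ b))
    (hωm : ∀ a b, ω (m a b) = m (ω a) (ω b))
    (hαψ : ∀ a, α (ψ a) = ψ (α a))
    (hαω : ∀ a, α (ω a) = ω (α a)) (hβψ : ∀ a, β (ψ a) = ψ (β a))
    (hβω : ∀ a, β (ω a) = ω (β a)) (hψω : ∀ a, ψ (ω a) = ω (ψ a))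
    (hψe : ψ e = e) (hωe : ω e = e) (hel : ∀ a, m e a = a)
    (hpα : TensorProduct.map α α p = p) (hpβ : TensorProduct.map β β p = p)
    (hpψ : TensorProduct.map ψ ψ p = p) (hpω : TensorProduct.map ω ω p = p)
    (hrβ : TensorProduct.map β β r = r) (hrψ : TensorProduct.map ψ ψ r = r)
    (hsα : TensorProduct.map α α s = s) (hsω : TensorProduct.map ω ω s = s)
    (hYB : m1312 α β ψ ω (p ⊗ₜ[K] r) - m1223 α β (p ⊗ₜ[K] p) + m2313 α β ψ ω (s ⊗ₜ[K] p)
      = (-lam) • t13 ψ ω e p) (x y : A) :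
    m (coreOp m ψ ω x p) (coreOp m ψ ω y p) =
      coreOp m ψ ω (m (coreOp m ψ ω x r) y) p + coreOp m ψ ω (m x (coreOp m ψ ω y s)) p
        + lam • coreOp m ψ ω (m x y) p := by
  have h1 : ∀ t u : A ⊗[K] A, corePhi m ψ ω x y (m1312 α β ψ ω (t ⊗ₜ[K] u)) =
      coreOp m ψ ω (m (coreOp m ψ ω x (TensorProduct.map ψ ψ (TensorProduct.map β β u))) y)
        (TensorProduct.map ψ ψ (TensorProduct.map ω ω (TensorProduct.map α α t))) := by
    intro t u
    induction t with
    | zero => simp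
    | add a b ha hb => simp only [TensorProduct.add_tmul, map_add, ha, hb]
    | tmul a b =>
      induction u with
      | zero => simp [coreOp]
      | add c d hc hd =>
        simp only [TensorProduct.tmul_add, map_add, hc, hd]
        simp [coreOp]
      | tmul c d =>
        simp [coreOp, corePhi, m1312, hm, hassoc, hψm, hωm, hαψ, hαω, hβψ, hβω, hψω]
  have h2 : ∀ t u : A ⊗[K] A, corePhi m ψ ω x y (m1223 α β (t ⊗ₜ[K] u)) =
      m (coreOp m ψ ω x (TensorProduct.map ψ ψ (TensorProduct.map α α t)))
        (coreOp m ψ ω y (TensorProduct.map ω ω (TensorProduct.map β β u))) := by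
    intro t u
    induction t with
    | zero => simp
    | add a b ha hb => simp only [TensorProduct.add_tmul, map_add, ha, hb, LinearMap.add_apply]
    | tmul a b =>
      induction u with
      | zero => simp [coreOp]
      | add c d hc hd => simp only [TensorProduct.tmul_add, map_add, hc, hd]
      | tmul c d =>
        simp [coreOp, corePhi, m1223, hm, hassoc, hψm, hωm, hαψ, hαω, hβψ, hβω, hψω]
  have h3 : ∀ u t : A ⊗[K] A, corePhi m ψ ω x y (m2313 α β ψ ω (u ⊗ₜ[K] t)) =
      coreOp m ψ ω (m x (coreOp m ψ ω y (TensorProduct.map ω ω (TensorProduct.map α α u))))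
        (TensorProduct.map ψ ψ (TensorProduct.map ω ω (TensorProduct.map β β t))) := by
    intro u t
    induction t with
    | zero => simp
    | add a b ha hb => simp only [TensorProduct.tmul_add, map_add, ha, hb]
    | tmul a b =>
      induction u with
      | zero => simp [coreOp]
      | add c d hc hd =>
        simp only [TensorProduct.add_tmul, map_add, hc, hd]
        simp [coreOp]
      | tmul c d =>
        simp [coreOp, corePhi, m2313, hm, hassoc, hψm, hωm, hαψ, hαω, hβψ, hβω, hψω]
  have h4 : ∀ t : A ⊗[K] A, corePhi m ψ ω x y (t13 ψ ω e t) =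
      coreOp m ψ ω (m x y) (TensorProduct.map ψ ψ (TensorProduct.map ω ω t)) := by
    intro t
    induction t with
    | zero => simp
    | add a b ha hb => simp only [map_add, ha, hb]
    | tmul a b => simp [coreOp, corePhi, t13, hassoc, hψe, hωe, hel, hψω]
  have h := congrArg (corePhi m ψ ω x y) hYB
  rw [map_add, map_sub, map_smul, h1, h2, h3, h4, hpα, hpβ, hpω, hpψ, hrβ, hrψ, hsα, hsω] at h
  rw [neg_smul] at h
  have h' := eq_neg_iff_add_eq_zero.mp h
  rw [← sub_eq_zero, ← neg_eq_zero, ← h']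
  abel

end Core

/-- Theorem 2.5: an associative BiHom-Yang-Baxter pair `(r, s)` of
weight `(λ, γ)` in a unitary BiHom-associative algebra, with `r, s` invariant under
the bijective pairwise-commuting maps `α, β, ψ, ω`, yields a double curved
Rota-Baxter BiHom-system `(A, R, S, α, β, ξ, ζ)` with
`R(a) = β²ψ(r¹)(α⁻¹β⁻¹(a)·αω(r²))`, `S(a) = β²ψ(s¹)(α⁻¹β⁻¹(a)·αω(s²))`,
`ξ(a⊗b) = λR(ab)`, `ζ(a⊗b) = γS(ab)`. -/
theorem stmt0 {K A : Type*} [Field K] [NonUnitalNonAssocRing A] [Module K A]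
    [SMulCommClass K A A] [IsScalarTower K A A]
    (α β ψ ω : A ≃ₗ[K] A) (e : A) (r s : A ⊗[K] A) (lam gam : K)
    -- BiHom-associative algebra axioms for (A, ·, α, β)
    (hαmul : ∀ a b, α (a * b) = α a * α b)
    (hβmul : ∀ a b, β (a * b) = β a * β b)
    (hassoc : ∀ a b c, α a * (b * c) = (a * b) * β c)
    -- ψ, ω multiplicative
    (hψmul : ∀ a b, ψ (a * b) = ψ a * ψ b)
    (hωmul : ∀ a b, ω (a * b) = ω a * ω b)
    -- α, β, ψ, ω pairwise commute
    (hαβ : ∀ a, α (β a) = β (α a)) (hαψ : ∀ a, α (ψ a) = ψ (α a))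
    (hαω : ∀ a, α (ω a) = ω (α a)) (hβψ : ∀ a, β (ψ a) = ψ (β a))
    (hβω : ∀ a, β (ω a) = ω (β a)) (hψω : ∀ a, ψ (ω a) = ω (ψ a))
    -- unit axioms
    (hαe : α e = e) (hβe : β e = e) (hψe : ψ e = e) (hωe : ω e = e)
    (her : ∀ a, a * e = α a) (hel : ∀ a, e * a = β a)
    -- r, s are α-, β-, ψ-, ω-invariant
    (hrα : TensorProduct.map α.toLinearMap α.toLinearMap r = r)
    (hrβ : TensorProduct.map β.toLinearMap β.toLinearMap r = r)
    (hrψ : TensorProduct.map ψ.toLinearMap ψ.toLinearMap r = r)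
    (hrω : TensorProduct.map ω.toLinearMap ω.toLinearMap r = r)
    (hsα : TensorProduct.map α.toLinearMap α.toLinearMap s = s)
    (hsβ : TensorProduct.map β.toLinearMap β.toLinearMap s = s)
    (hsψ : TensorProduct.map ψ.toLinearMap ψ.toLinearMap s = s)
    (hsω : TensorProduct.map ω.toLinearMap ω.toLinearMap s = s)
    -- (r, s) is an abhYBp of weight (λ, γ):
    -- r₁₃r₁₂ − r₁₂r₂₃ + s₂₃r₁₃ = −λ·r₁₃ and s₁₃r₁₂ − s₁₂s₂₃ + s₂₃s₁₃ = −γ·s₁₃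
    (hYB1 : m1312 α.toLinearMap β.toLinearMap ψ.toLinearMap ω.toLinearMap (r ⊗ₜ[K] r)
        - m1223 α.toLinearMap β.toLinearMap (r ⊗ₜ[K] r)
        + m2313 α.toLinearMap β.toLinearMap ψ.toLinearMap ω.toLinearMap (s ⊗ₜ[K] r)
      = (-lam) • t13 ψ.toLinearMap ω.toLinearMap e r)
    (hYB2 : m1312 α.toLinearMap β.toLinearMap ψ.toLinearMap ω.toLinearMap (s ⊗ₜ[K] r)
        - m1223 α.toLinearMap β.toLinearMap (s ⊗ₜ[K] s)
        + m2313 α.toLinearMap β.toLinearMap ψ.toLinearMap ω.toLinearMap (s ⊗ₜ[K] s)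
      = (-gam) • t13 ψ.toLinearMap ω.toLinearMap e s) :
    -- conclusion: (A, R, S, α, β, ξ, ζ) is a double curved Rota-Baxter BiHom-system
    IsLinearMap K (rbOp α β ψ ω r) ∧ IsLinearMap K (rbOp α β ψ ω s) ∧
    (∀ a, rbOp α β ψ ω r (α a) = α (rbOp α β ψ ω r a)) ∧
    (∀ a, rbOp α β ψ ω r (β a) = β (rbOp α β ψ ω r a)) ∧
    (∀ a, rbOp α β ψ ω s (α a) = α (rbOp α β ψ ω s a)) ∧
    (∀ a, rbOp α β ψ ω s (β a) = β (rbOp α β ψ ω s a)) ∧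
    (∀ a b, rbOp α β ψ ω r a * rbOp α β ψ ω r b =
      rbOp α β ψ ω r (rbOp α β ψ ω r a * b) + rbOp α β ψ ω r (a * rbOp α β ψ ω s b)
        + lam • rbOp α β ψ ω r (a * b)) ∧
    (∀ a b, rbOp α β ψ ω s a * rbOp α β ψ ω s b =
      rbOp α β ψ ω s (rbOp α β ψ ω r a * b) + rbOp α β ψ ω s (a * rbOp α β ψ ω s b)
        + gam • rbOp α β ψ ω s (a * b)) := by
  let m : A →ₗ[K] A →ₗ[K] A :=
    ((LinearMap.mul K A).compl₂ β.symm.toLinearMap) ∘ₗ α.symm.toLinearMap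
  have mdef : ∀ a b, m a b = α.symm a * β.symm b := fun a b => rfl
  have hm : ∀ a b, a * b = m (α a) (β b) := by intro a b; simp [mdef]
  -- every multiplicative bijection commuting with `α` and `β` is multiplicative for `m`
  have hmul : ∀ F : A ≃ₗ[K] A, (∀ a b, F (a * b) = F a * F b) → (∀ a, α (F a) = F (α a)) →
      (∀ a, β (F a) = F (β a)) → ∀ a b, F (m a b) = m (F a) (F b) := by
    intro F h1 h2 h3 a b
    obtain ⟨a, rfl⟩ := α.surjective a
    obtain ⟨b, rfl⟩ := β.surjective b
    rw [← hm, h1, hm, h2, h3]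
  have mα := hmul α hαmul (fun _ => rfl) (fun a => (hαβ a).symm)
  have mβ := hmul β hβmul hαβ (fun _ => rfl)
  have mψ := hmul ψ hψmul hαψ hβψ
  have mω := hmul ω hωmul hαω hβω
  have massoc : ∀ a b c, m (m a b) c = m a (m b c) := by
    intro a b c
    obtain ⟨a, rfl⟩ := α.surjective a
    obtain ⟨a, rfl⟩ := α.surjective a
    obtain ⟨b, rfl⟩ := α.surjective b
    obtain ⟨b, rfl⟩ := β.surjective b
    obtain ⟨c, rfl⟩ := β.surjective c
    obtain ⟨c, rfl⟩ := β.surjective c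
    have h := hassoc a b c
    simp only [hm, mα, mβ] at h
    rw [hαβ b, h, hαβ b]
  have mel : ∀ a, m e a = a := by
    intro a
    obtain ⟨a, rfl⟩ := β.surjective a
    have h := hel a
    rw [hm, hαe] at h
    exact h
  have hop : ∀ t : A ⊗[K] A,
      TensorProduct.map α.toLinearMap α.toLinearMap t = t →
      TensorProduct.map β.toLinearMap β.toLinearMap t = t →
      ∀ a, rbOp α β ψ ω t a = coreOp m ψ.toLinearMap ω.toLinearMap a t := by
    intro t hα hβ a
    have key : ∀ t : A ⊗[K] A, rbOp α β ψ ω t a = coreOp m ψ.toLinearMap ω.toLinearMap a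
        (TensorProduct.map β.toLinearMap β.toLinearMap
          (TensorProduct.map β.toLinearMap β.toLinearMap
            (TensorProduct.map α.toLinearMap α.toLinearMap t))) := by
      intro t
      induction t with
      | zero => simp [rbOp]
      | add a b ha hb =>
        simp only [map_add, ← ha, ← hb]
        simp [rbOp]
      | tmul a b => simp [rbOp, coreOp, hm, mβ, hαβ, hαψ, hαω, hβψ, hβω]
    rw [key, hα, hβ, hβ]
  have hcomm : ∀ F : A ≃ₗ[K] A, (∀ a b, F (m a b) = m (F a) (F b)) →
      (∀ a, F (ψ a) = ψ (F a)) → (∀ a, F (ω a) = ω (F a)) → ∀ t : A ⊗[K] A,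
      TensorProduct.map F.toLinearMap F.toLinearMap t = t →
      ∀ a, coreOp m ψ.toLinearMap ω.toLinearMap (F a) t =
        F (coreOp m ψ.toLinearMap ω.toLinearMap a t) := by
    intro F h1 h2 h3 t ht a
    have key : ∀ t : A ⊗[K] A, coreOp m ψ.toLinearMap ω.toLinearMap (F a)
        (TensorProduct.map F.toLinearMap F.toLinearMap t) =
        F (coreOp m ψ.toLinearMap ω.toLinearMap a t) := by
      intro t
      induction t with
      | zero => simp
      | add a b ha hb => simp only [map_add, ha, hb]
      | tmul a b => simp [coreOp, h1, h2, h3]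
    rw [← key, ht]
  have hlin : ∀ t : A ⊗[K] A, IsLinearMap K (rbOp α β ψ ω t) := by
    intro t
    constructor
    · intro x y
      induction t with
      | zero => simp [rbOp]
      | add a b ha hb =>
        simp only [rbOp, map_add] at ha hb ⊢
        rw [ha, hb]; abel
      | tmul a b => simp [rbOp, add_mul, mul_add]
    · intro c x
      induction t with
      | zero => simp [rbOp]
      | add a b ha hb =>
        simp only [rbOp, map_add] at ha hb ⊢
        rw [ha, hb, smul_add]
      | tmul a b => simp [rbOp, smul_mul_assoc, mul_smul_comm]
  have cα := hcomm α mα hαψ hαω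
  have cβ := hcomm β mβ hβψ hβω
  have opr := hop r hrα hrβ
  have ops := hop s hsα hsβ
  refine ⟨hlin r, hlin s, ?_, ?_, ?_, ?_, ?_, ?_⟩
  · intro a; rw [opr, opr, cα r hrα]
  · intro a; rw [opr, opr, cβ r hrβ]
  · intro a; rw [ops, ops, cα s hsα]
  · intro a; rw [ops, ops, cβ s hsβ]
  · intro a b
    simp only [opr, ops, hm, ← cα r hrα, ← cβ r hrβ, ← cβ s hsβ]
    exact core_rel m α.toLinearMap β.toLinearMap ψ.toLinearMap ω.toLinearMap e r r s lam
      hm massoc mψ mω hαψ hαω hβψ hβω hψω hψe hωe mel hrα hrβ hrψ hrω hrβ hrψ hsα hsω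
      hYB1 (α a) (β b)
  · intro a b
    simp only [opr, ops, hm, ← cα r hrα, ← cα s hsα, ← cβ s hsβ]
    exact core_rel m α.toLinearMap β.toLinearMap ψ.toLinearMap ω.toLinearMap e s r s gam
      hm massoc mψ mω hαψ hαω hβψ hβω hψω hψe hωe mel hsα hsβ hsψ hsω hrβ hrψ hsα hsω
      hYB2 (α a) (β b)
end

section
/- Let (A, μ, α, β) be a unitary BiHom-associative algebra, and let ψ, ω : A → A be linear maps with ψ(ab) = ψ(a)ψ(b), ω(ab) = ω(a)ω(b), ψ(1_A) = ω(1_A) = 1_A, such that α, β, ψ, ω are bijective and pairwise commuting. Suppose r ∈ A⊗A is a solution to the associative BiHom-Yang-Baxter equation of weight λ in (A, μ, α, β) such that r is α-, β-, ψ-, and ω-invariant. Define R : A → A by R(a) = β²ψ(r¹)·(α⁻¹β⁻¹(a)·αω(r²)). Then (A, μ, R, α, β) is a Rota-Baxter BiHom-associative algebra of weight λ. -/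
open TensorProduct

/-- Corollary 2.6: a solution `r` of the associative
BiHom-Yang-Baxter equation of weight `λ` in a unitary BiHom-associative algebra,
invariant under the bijective pairwise-commuting maps `α, β, ψ, ω`, yields a
Rota-Baxter BiHom-associative algebra `(A, μ, R, α, β)` of weight `λ` with
`R(a) = β²ψ(r¹)(α⁻¹β⁻¹(a)·αω(r²))`. -/
theorem stmt1 {K A : Type*} [Field K] [NonUnitalNonAssocRing A] [Module K A]
    [SMulCommClass K A A] [IsScalarTower K A A]
    (α β ψ ω : A ≃ₗ[K] A) (e : A) (r : A ⊗[K] A) (lam : K)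
    -- BiHom-associative algebra axioms for (A, ·, α, β)
    (hαmul : ∀ a b, α (a * b) = α a * α b)
    (hβmul : ∀ a b, β (a * b) = β a * β b)
    (hassoc : ∀ a b c, α a * (b * c) = (a * b) * β c)
    -- ψ, ω multiplicative
    (hψmul : ∀ a b, ψ (a * b) = ψ a * ψ b)
    (hωmul : ∀ a b, ω (a * b) = ω a * ω b)
    -- α, β, ψ, ω pairwise commute
    (hαβ : ∀ a, α (β a) = β (α a)) (hαψ : ∀ a, α (ψ a) = ψ (α a))
    (hαω : ∀ a, α (ω a) = ω (α a)) (hβψ : ∀ a, β (ψ a) = ψ (β a))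
    (hβω : ∀ a, β (ω a) = ω (β a)) (hψω : ∀ a, ψ (ω a) = ω (ψ a))
    -- unit axioms
    (hαe : α e = e) (hβe : β e = e) (hψe : ψ e = e) (hωe : ω e = e)
    (her : ∀ a, a * e = α a) (hel : ∀ a, e * a = β a)
    -- r is α-, β-, ψ-, ω-invariant
    (hrα : TensorProduct.map α.toLinearMap α.toLinearMap r = r)
    (hrβ : TensorProduct.map β.toLinearMap β.toLinearMap r = r)
    (hrψ : TensorProduct.map ψ.toLinearMap ψ.toLinearMap r = r)
    (hrω : TensorProduct.map ω.toLinearMap ω.toLinearMap r = r)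
    -- r is a solution of the abhYBe of weight λ:
    -- r₁₃r₁₂ − r₁₂r₂₃ + r₂₃r₁₃ = −λ·r₁₃
    (hYB : m1312 α.toLinearMap β.toLinearMap ψ.toLinearMap ω.toLinearMap (r ⊗ₜ[K] r)
        - m1223 α.toLinearMap β.toLinearMap (r ⊗ₜ[K] r)
        + m2313 α.toLinearMap β.toLinearMap ψ.toLinearMap ω.toLinearMap (r ⊗ₜ[K] r)
      = (-lam) • t13 ψ.toLinearMap ω.toLinearMap e r) :
    -- conclusion: (A, μ, R, α, β) is a Rota-Baxter BiHom-associative algebra of weight λ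
    IsLinearMap K (rbOp α β ψ ω r) ∧
    (∀ a, rbOp α β ψ ω r (α a) = α (rbOp α β ψ ω r a)) ∧
    (∀ a, rbOp α β ψ ω r (β a) = β (rbOp α β ψ ω r a)) ∧
    (∀ a b, rbOp α β ψ ω r a * rbOp α β ψ ω r b =
      rbOp α β ψ ω r (rbOp α β ψ ω r a * b) + rbOp α β ψ ω r (a * rbOp α β ψ ω r b)
        + lam • rbOp α β ψ ω r (a * b)) := by
  -- the untwisted associative product
  let M : A →ₗ[K] A →ₗ[K] A :=
    (LinearMap.mul K A).compl₁₂ α.symm.toLinearMap β.symm.toLinearMap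
  have hM : ∀ a b, M a b = α.symm a * β.symm b := fun a b => rfl
  have hmulM : ∀ a b, a * b = M (α a) (β b) := by
    intro a b; simp [hM]
  clear_value M
  have hsβ : ∀ a, α.symm (β a) = β (α.symm a) := fun a => by
    apply α.injective; simp [hαβ]
  have hsα : ∀ a, β.symm (α a) = α (β.symm a) := fun a => by
    apply β.injective; simp [← hαβ]
  have hαM : ∀ a b, α (M a b) = M (α a) (α b) := by
    intro a b; simp [hM, hαmul, hsα]
  have hβM : ∀ a b, β (M a b) = M (β a) (β b) := by
    intro a b; simp [hM, hβmul, hsβ]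
  have hψM : ∀ a b, ψ (M a b) = M (ψ a) (ψ b) := by
    intro a b
    obtain ⟨a, rfl⟩ := α.surjective a
    obtain ⟨b, rfl⟩ := β.surjective b
    simp [hM, hψmul, ← hαψ, ← hβψ]
  have hωM : ∀ a b, ω (M a b) = M (ω a) (ω b) := by
    intro a b
    obtain ⟨a, rfl⟩ := α.surjective a
    obtain ⟨b, rfl⟩ := β.surjective b
    simp [hM, hωmul, ← hαω, ← hβω]
  have hψsM : ∀ a b, ψ.symm (M a b) = M (ψ.symm a) (ψ.symm b) := by
    intro a b; apply ψ.injective; simp [hψM]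
  have hωsM : ∀ a b, ω.symm (M a b) = M (ω.symm a) (ω.symm b) := by
    intro a b; apply ω.injective; simp [hωM]
  have hMassoc : ∀ a b c, M (M a b) c = M a (M b c) := by
    intro a b c
    obtain ⟨a, rfl⟩ := α.surjective a
    obtain ⟨a, rfl⟩ := α.surjective a
    obtain ⟨b, rfl⟩ := β.surjective b
    obtain ⟨b, rfl⟩ := α.surjective b
    obtain ⟨c, rfl⟩ := β.surjective c
    obtain ⟨c, rfl⟩ := β.surjective c
    have h1 : M (α (α a)) (β (α b)) = α (a * b) := by
      rw [← hmulM, hαmul]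
    have h2 : M (β (α b)) (β (β c)) = β (b * c) := by
      rw [← hαβ, ← hmulM, hβmul]
    rw [h1, h2, ← hmulM, ← hmulM, hassoc]
  have hMe : ∀ a, M e a = a := by
    intro a
    have := hmulM e (β.symm a)
    rw [hel, hαe] at this
    simpa using this.symm
  -- inverse invariance
  have inv : ∀ f : A ≃ₗ[K] A, TensorProduct.map f.toLinearMap f.toLinearMap r = r →
      TensorProduct.map f.symm.toLinearMap f.symm.toLinearMap r = r := by
    intro f hf
    conv_lhs => rw [← hf]
    rw [← LinearMap.comp_apply, ← TensorProduct.map_comp]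
    simp
  have hrα' := inv α hrα
  have hrβ' := inv β hrβ
  obtain ⟨S, hS⟩ := TensorProduct.exists_finset r
  have hR : ∀ a, rbOp α β ψ ω r a = ∑ i ∈ S, M (ψ i.1) (M a (ω i.2)) := by
    intro a
    have h : r = TensorProduct.map α.symm.toLinearMap α.symm.toLinearMap
        (TensorProduct.map β.symm.toLinearMap β.symm.toLinearMap
        (TensorProduct.map β.symm.toLinearMap β.symm.toLinearMap r)) := by
      rw [hrβ', hrβ', hrα']
    rw [h, hS]
    simp only [rbOp, map_sum, TensorProduct.map_tmul, LinearMap.mul'_apply, LinearMap.comp_apply,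
      LinearEquiv.coe_coe, LinearMap.mulLeft_apply]
    refine Finset.sum_congr rfl fun i _ => ?_
    simp only [hmulM, hβM, hαβ, hαψ, hαω, hβψ, hβω, LinearEquiv.apply_symm_apply]
  have hRα : ∀ a, rbOp α β ψ ω r (α a) = α (rbOp α β ψ ω r a) := by
    intro a
    have h : ∀ a, rbOp α β ψ ω r a = ∑ i ∈ S, M (ψ (α i.1)) (M a (ω (α i.2))) := by
      intro a
      have hr : TensorProduct.lift (M.compl₁₂ ψ.toLinearMap (M a ∘ₗ ω.toLinearMap)) r =
          TensorProduct.lift (M.compl₁₂ ψ.toLinearMap (M a ∘ₗ ω.toLinearMap))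
            (TensorProduct.map α.toLinearMap α.toLinearMap r) := by rw [hrα]
      rw [hR]
      rw [hS] at hr
      simpa using hr
    rw [h, hR]
    simp [hαM, hαψ, hαω]
  have hRβ : ∀ a, rbOp α β ψ ω r (β a) = β (rbOp α β ψ ω r a) := by
    intro a
    have h : ∀ a, rbOp α β ψ ω r a = ∑ i ∈ S, M (ψ (β i.1)) (M a (ω (β i.2))) := by
      intro a
      have hr : TensorProduct.lift (M.compl₁₂ ψ.toLinearMap (M a ∘ₗ ω.toLinearMap)) r =
          TensorProduct.lift (M.compl₁₂ ψ.toLinearMap (M a ∘ₗ ω.toLinearMap))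
            (TensorProduct.map β.toLinearMap β.toLinearMap r) := by rw [hrβ]
      rw [hR]
      rw [hS] at hr
      simpa using hr
    rw [h, hR]
    simp [hβM, hβψ, hβω]
  refine ⟨⟨fun a b => ?_, fun c a => ?_⟩, hRα, hRβ, ?_⟩
  · simp [hR, Finset.sum_add_distrib]
  · simp [hR, Finset.smul_sum]
  have key : ∀ a b, M (rbOp α β ψ ω r a) (rbOp α β ψ ω r b) =
      rbOp α β ψ ω r (M (rbOp α β ψ ω r a) b) + rbOp α β ψ ω r (M a (rbOp α β ψ ω r b))
        + lam • rbOp α β ψ ω r (M a b) := by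
    intro a b
    let T : A ⊗[K] (A ⊗[K] A) →ₗ[K] A :=
      TensorProduct.lift M ∘ₗ TensorProduct.map
        (M.flip a ∘ₗ ψ.toLinearMap ∘ₗ ω.symm.toLinearMap)
        (TensorProduct.lift M ∘ₗ TensorProduct.map (M.flip b)
          (ω.toLinearMap ∘ₗ ψ.symm.toLinearMap))
    have hT : ∀ x y z, T (x ⊗ₜ (y ⊗ₜ z)) =
        M (ψ (ω.symm x)) (M a (M y (M b (ω (ψ.symm z))))) := by
      intro x y z; simp [T, hMassoc]
    clear_value T
    have h1 : T (m1312 α.toLinearMap β.toLinearMap ψ.toLinearMap ω.toLinearMap (r ⊗ₜ[K] r)) =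
        rbOp α β ψ ω r (M (rbOp α β ψ ω r a) b) := by
      have h : r ⊗ₜ[K] r =
          TensorProduct.map α.symm.toLinearMap α.symm.toLinearMap r ⊗ₜ[K]
          TensorProduct.map ω.toLinearMap ω.toLinearMap
            (TensorProduct.map β.symm.toLinearMap β.symm.toLinearMap r) := by
        rw [hrβ', hrα', hrω]
      rw [h]
      simp only [hR]
      rw [hS]
      simp [m1312, TensorProduct.sum_tmul, TensorProduct.tmul_sum, hT, hmulM, hψM, hωM, hψsM, hωsM,
        hMassoc, hαβ, hαψ, hαω, hβψ, hβω]
      exact Finset.sum_comm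
    have h2 : T (m1223 α.toLinearMap β.toLinearMap (r ⊗ₜ[K] r)) =
        M (rbOp α β ψ ω r a) (rbOp α β ψ ω r b) := by
      have h : r ⊗ₜ[K] r =
          TensorProduct.map ω.toLinearMap ω.toLinearMap
            (TensorProduct.map α.symm.toLinearMap α.symm.toLinearMap r) ⊗ₜ[K]
          TensorProduct.map ψ.toLinearMap ψ.toLinearMap
            (TensorProduct.map β.symm.toLinearMap β.symm.toLinearMap r) := by
        rw [hrβ', hrα', hrω, hrψ]
      rw [h]
      simp only [hR]
      rw [hS]
      simp [m1223, TensorProduct.sum_tmul, TensorProduct.tmul_sum, hT, hmulM, hψM, hωM, hψsM, hωsM,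
        hMassoc, hαβ, hαψ, hαω, hβψ, hβω]
    have h3 : T (m2313 α.toLinearMap β.toLinearMap ψ.toLinearMap ω.toLinearMap (r ⊗ₜ[K] r)) =
        rbOp α β ψ ω r (M a (rbOp α β ψ ω r b)) := by
      have h : r ⊗ₜ[K] r =
          TensorProduct.map ψ.toLinearMap ψ.toLinearMap
            (TensorProduct.map α.symm.toLinearMap α.symm.toLinearMap r) ⊗ₜ[K]
          TensorProduct.map β.symm.toLinearMap β.symm.toLinearMap r := by
        rw [hrβ', hrα', hrψ]
      rw [h]
      simp only [hR]
      rw [hS]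
      simp [m2313, TensorProduct.sum_tmul, TensorProduct.tmul_sum, hT, hmulM, hψM, hωM, hψsM, hωsM,
        hMassoc, hαβ, hαψ, hαω, hβψ, hβω]
    have h4 : T (t13 ψ.toLinearMap ω.toLinearMap e r) = rbOp α β ψ ω r (M a b) := by
      rw [hR]
      rw [hS]
      simp [t13, hT, hMassoc, hMe]
    have h5 := congrArg T hYB
    rw [map_add, map_sub, map_smul, h1, h2, h3, h4, neg_smul] at h5
    rw [← sub_eq_zero] at h5 ⊢
    rw [← neg_eq_zero, ← h5]
    abel
  intro a b
  rw [hmulM, ← hRα, ← hRβ, key, hmulM (rbOp α β ψ ω r a) b, hmulM a (rbOp α β ψ ω r b),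
    hmulM a b, hRα, hRβ]
end

section
/- Let (A, μ, α, β) be a BiHom-associative algebra and T : A⊗A → A⊗A a double curved weak BiHom-pseudotwistor with weak companion 𝔗 and curvatures ξ, ζ. Then the multiplication μ∘T satisfies the BiHom-associativity law: (μ∘T)∘(α⊗(μ∘T)) = (μ∘T)∘((μ∘T)⊗β) as maps A⊗A⊗A → A. -/
open TensorProduct

/-- Proposition 2.13: if `T : A⊗A → A⊗A` is a double curved weak
BiHom-pseudotwistor on a BiHom-associative algebra `(A, μ, α, β)`, with weak
companion `𝔗` and curvatures `ξ, ζ`, then `μ∘T` is BiHom-associative, i.e.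
`(μ∘T)∘(α⊗(μ∘T)) = (μ∘T)∘((μ∘T)⊗β)` as maps `A⊗A⊗A → A`. -/
theorem stmt7 {K A : Type*} [Field K] [NonUnitalNonAssocRing A] [Module K A]
    [SMulCommClass K A A] [IsScalarTower K A A]
    (α β : A →ₗ[K] A)
    (T : A ⊗[K] A →ₗ[K] A ⊗[K] A)
    (TT : A ⊗[K] (A ⊗[K] A) →ₗ[K] A ⊗[K] (A ⊗[K] A))
    (ξ ζ : A ⊗[K] A →ₗ[K] A)
    -- BiHom-associative algebra axioms for (A, ·, α, β)
    (hαβ : ∀ a, α (β a) = β (α a))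
    (hαmul : ∀ a b, α (a * b) = α a * α b)
    (hβmul : ∀ a b, β (a * b) = β a * β b)
    (hassoc : ∀ a b c, α a * (b * c) = (a * b) * β c)
    -- μ∘(α⊗ζ) = μ∘(ξ⊗β)
    (hcurv : LinearMap.mul' K A ∘ₗ TensorProduct.map α ζ =
      LinearMap.mul' K A ∘ₗ TensorProduct.map ξ β ∘ₗ
        (TensorProduct.assoc K A A A).symm.toLinearMap)
    -- T∘(α⊗(μ∘T)) = (α⊗μ)∘𝔗 − α⊗ζ
    (hT1 : T ∘ₗ TensorProduct.map α (LinearMap.mul' K A ∘ₗ T) =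
      TensorProduct.map α (LinearMap.mul' K A) ∘ₗ TT - TensorProduct.map α ζ)
    -- T∘((μ∘T)⊗β) = (μ⊗β)∘𝔗 − ξ⊗β
    (hT2 : T ∘ₗ TensorProduct.map (LinearMap.mul' K A ∘ₗ T) β ∘ₗ
        (TensorProduct.assoc K A A A).symm.toLinearMap =
      TensorProduct.map (LinearMap.mul' K A) β ∘ₗ
          (TensorProduct.assoc K A A A).symm.toLinearMap ∘ₗ TT -
        TensorProduct.map ξ β ∘ₗ (TensorProduct.assoc K A A A).symm.toLinearMap) :
    (LinearMap.mul' K A ∘ₗ T) ∘ₗ TensorProduct.map α (LinearMap.mul' K A ∘ₗ T) =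
      (LinearMap.mul' K A ∘ₗ T) ∘ₗ TensorProduct.map (LinearMap.mul' K A ∘ₗ T) β ∘ₗ
        (TensorProduct.assoc K A A A).symm.toLinearMap := by
  have hA : LinearMap.mul' K A ∘ₗ TensorProduct.map α (LinearMap.mul' K A) =
      LinearMap.mul' K A ∘ₗ TensorProduct.map (LinearMap.mul' K A) β ∘ₗ
        (TensorProduct.assoc K A A A).symm.toLinearMap := by
    apply LinearMap.ext
    intro x
    induction x using TensorProduct.induction_on with
    | zero => simp only [map_zero]
    | add x y hx hy => simp only [map_add, hx, hy]
    | tmul a y =>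
      induction y using TensorProduct.induction_on with
      | zero => simp only [tmul_zero, map_zero]
      | add x y hx hy => simp only [tmul_add, map_add, hx, hy]
      | tmul b c => simp [hassoc]
  rw [LinearMap.comp_assoc, hT1, LinearMap.comp_assoc, hT2, LinearMap.comp_sub,
    LinearMap.comp_sub, hcurv, ← LinearMap.comp_assoc, hA]
  simp only [LinearMap.comp_assoc]
end

section
/- Let (A, R, S, α, β, ξ, ζ) be a double curved Rota-Baxter BiHom-system satisfying μ∘(α⊗ζ) = μ∘(ξ⊗β), and define T : A⊗A → A⊗A by T(a⊗b) = R(a)⊗b + a⊗S(b) and 𝔗 : A⊗A⊗A → A⊗A⊗A by 𝔗(a⊗b⊗c) = R(a)⊗R(b)⊗c + R(a)⊗b⊗S(c) + a⊗S(b)⊗S(c). Then T is a double curved weak BiHom-pseudotwistor with weak companion 𝔗 and curvatures ξ, ζ. -/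
open TensorProduct

section Defs

variable {K A : Type*} [Field K] [NonUnitalNonAssocRing A] [Module K A]
  [SMulCommClass K A A] [IsScalarTower K A A]

/-- `T(a⊗b) = R(a)⊗b + a⊗S(b)`. -/
noncomputable def twistT (R S : A →ₗ[K] A) : A ⊗[K] A →ₗ[K] A ⊗[K] A :=
  TensorProduct.map R LinearMap.id + TensorProduct.map LinearMap.id S

/-- `𝔗(a⊗b⊗c) = R(a)⊗R(b)⊗c + R(a)⊗b⊗S(c) + a⊗S(b)⊗S(c)`. -/
noncomputable def twistTT (R S : A →ₗ[K] A) :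
    A ⊗[K] (A ⊗[K] A) →ₗ[K] A ⊗[K] (A ⊗[K] A) :=
  TensorProduct.map R (TensorProduct.map R LinearMap.id) +
    TensorProduct.map R (TensorProduct.map LinearMap.id S) +
    TensorProduct.map LinearMap.id (TensorProduct.map S S)

end Defs

/-- Theorem 2.17: a double curved Rota-Baxter BiHom-system
`(A, R, S, α, β, ξ, ζ)` satisfying `μ∘(α⊗ζ) = μ∘(ξ⊗β)` gives rise to a double
curved weak BiHom-pseudotwistor `T(a⊗b) = R(a)⊗b + a⊗S(b)` with weak companion
`𝔗(a⊗b⊗c) = R(a)⊗R(b)⊗c + R(a)⊗b⊗S(c) + a⊗S(b)⊗S(c)` and curvatures `ξ, ζ`. -/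
theorem stmt8 {K A : Type*} [Field K] [NonUnitalNonAssocRing A] [Module K A]
    [SMulCommClass K A A] [IsScalarTower K A A]
    (α β R S : A →ₗ[K] A) (ξ ζ : A ⊗[K] A →ₗ[K] A)
    -- BiHom-associative algebra axioms for (A, ·, α, β)
    (hαβ : ∀ a, α (β a) = β (α a))
    (hαmul : ∀ a b, α (a * b) = α a * α b)
    (hβmul : ∀ a b, β (a * b) = β a * β b)
    (hassoc : ∀ a b c, α a * (b * c) = (a * b) * β c)
    -- R, S commute with α and β
    (hRα : ∀ a, R (α a) = α (R a)) (hRβ : ∀ a, R (β a) = β (R a))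
    (hSα : ∀ a, S (α a) = α (S a)) (hSβ : ∀ a, S (β a) = β (S a))
    -- double curved Rota-Baxter BiHom-system identities
    (hR : ∀ a b, R a * R b = R (R a * b) + R (a * S b) + ξ (a ⊗ₜ[K] b))
    (hS : ∀ a b, S a * S b = S (R a * b) + S (a * S b) + ζ (a ⊗ₜ[K] b))
    -- μ∘(α⊗ζ) = μ∘(ξ⊗β)
    (hcurv : LinearMap.mul' K A ∘ₗ TensorProduct.map α ζ =
      LinearMap.mul' K A ∘ₗ TensorProduct.map ξ β ∘ₗ
        (TensorProduct.assoc K A A A).symm.toLinearMap) :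
    -- conclusion: T is a double curved weak BiHom-pseudotwistor with weak
    -- companion 𝔗 and curvatures ξ, ζ
    (LinearMap.mul' K A ∘ₗ TensorProduct.map α ζ =
      LinearMap.mul' K A ∘ₗ TensorProduct.map ξ β ∘ₗ
        (TensorProduct.assoc K A A A).symm.toLinearMap) ∧
    (twistT R S ∘ₗ TensorProduct.map α (LinearMap.mul' K A ∘ₗ twistT R S) =
      TensorProduct.map α (LinearMap.mul' K A) ∘ₗ twistTT R S -
        TensorProduct.map α ζ) ∧
    (twistT R S ∘ₗ TensorProduct.map (LinearMap.mul' K A ∘ₗ twistT R S) β ∘ₗ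
        (TensorProduct.assoc K A A A).symm.toLinearMap =
      TensorProduct.map (LinearMap.mul' K A) β ∘ₗ
          (TensorProduct.assoc K A A A).symm.toLinearMap ∘ₗ twistTT R S -
        TensorProduct.map ξ β ∘ₗ (TensorProduct.assoc K A A A).symm.toLinearMap) := by
  refine ⟨hcurv, ?_, ?_⟩
  · refine TensorProduct.ext_threefold' ?_
    intro a b c
    have h := hS b c
    simp only [twistT, twistTT, LinearMap.comp_apply, LinearMap.add_apply, LinearMap.sub_apply,
      TensorProduct.map_tmul, LinearMap.id_apply, LinearMap.mul'_apply, map_add, hRα, h,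
      TensorProduct.tmul_add]
    abel
  · refine TensorProduct.ext_threefold' ?_
    intro a b c
    have h := hR a b
    simp only [twistT, twistTT, LinearMap.comp_apply, LinearMap.add_apply, LinearMap.sub_apply,
      LinearEquiv.coe_coe, TensorProduct.assoc_symm_tmul,
      TensorProduct.map_tmul, LinearMap.id_apply, LinearMap.mul'_apply, map_add, hSβ, h,
      TensorProduct.add_tmul]
    abel
end

section
/- Let (A, μ, α_A, β_A) be a BiHom-associative algebra, and let (M, ▷, ◁, α_M, β_M), (N, ▷, ◁, α_N, β_N), (V, ▷, ◁, α_V, β_V) be bimodules over (A, μ, α_A, β_A). Let ψ_A, ω_A : A → A be linear maps such that ψ_A(ab) = ψ_A(a)ψ_A(b), ω_A(ab) = ω_A(a)ω_A(b), and any two of α_A, β_A, ψ_A, ω_A commute. Define a left and a right action of A on M⊗N⊗V by a▷(m⊗n⊗v) = (ω_A(a)▷m)⊗β_N(n)⊗β_V(v) and (m⊗n⊗v)◁a = α_M(m)⊗α_N(n)⊗(v◁ψ_A(a)). Then (M⊗N⊗V, ▷, ◁, α_M⊗α_N⊗α_V, β_M⊗β_N⊗β_V) is a bimodule over (A, μ,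 α_A, β_A). -/
open TensorProduct

section Defs

variable {K A M N V : Type*} [Field K] [NonUnitalNonAssocRing A] [Module K A]
  [SMulCommClass K A A] [IsScalarTower K A A]
  [AddCommGroup M] [Module K M] [AddCommGroup N] [Module K N]
  [AddCommGroup V] [Module K V]

/-- The left action `a ▷ (m⊗n⊗v) = (ω_A(a)▷m) ⊗ β_N(n) ⊗ β_V(v)`. -/
noncomputable def lact3 (ωA : A →ₗ[K] A) (lM : A →ₗ[K] M →ₗ[K] M)
    (βN : N →ₗ[K] N) (βV : V →ₗ[K] V) (a : A) :
    M ⊗[K] (N ⊗[K] V) →ₗ[K] M ⊗[K] (N ⊗[K] V) :=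
  TensorProduct.map (lM (ωA a)) (TensorProduct.map βN βV)

/-- The right action `(m⊗n⊗v) ◁ a = α_M(m) ⊗ α_N(n) ⊗ (v ◁ ψ_A(a))`. -/
noncomputable def ract3 (ψA : A →ₗ[K] A) (αM : M →ₗ[K] M) (αN : N →ₗ[K] N)
    (rV : V →ₗ[K] A →ₗ[K] V) (a : A) :
    M ⊗[K] (N ⊗[K] V) →ₗ[K] M ⊗[K] (N ⊗[K] V) :=
  TensorProduct.map αM (TensorProduct.map αN (rV.flip (ψA a)))

end Defs

/-- Proposition 2.19: given a BiHom-associative algebra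
`(A, μ, α_A, β_A)`, bimodules `M, N, V` over it, and multiplicative maps
`ψ_A, ω_A : A → A` such that any two of `α_A, β_A, ψ_A, ω_A` commute, the actions
`a▷(m⊗n⊗v) = (ω_A(a)▷m)⊗β_N(n)⊗β_V(v)` and `(m⊗n⊗v)◁a = α_M(m)⊗α_N(n)⊗(v◁ψ_A(a))`
make `(M⊗N⊗V, ▷, ◁, α_M⊗α_N⊗α_V, β_M⊗β_N⊗β_V)` an `(A, μ, α_A, β_A)`-bimodule. -/
theorem stmt9 {K A M N V : Type*} [Field K] [NonUnitalNonAssocRing A] [Module K A]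
    [SMulCommClass K A A] [IsScalarTower K A A]
    [AddCommGroup M] [Module K M] [AddCommGroup N] [Module K N]
    [AddCommGroup V] [Module K V]
    (αA βA ψA ωA : A →ₗ[K] A)
    (αM βM : M →ₗ[K] M) (αN βN : N →ₗ[K] N) (αV βV : V →ₗ[K] V)
    (lM : A →ₗ[K] M →ₗ[K] M) (rM : M →ₗ[K] A →ₗ[K] M)
    (lN : A →ₗ[K] N →ₗ[K] N) (rN : N →ₗ[K] A →ₗ[K] N)
    (lV : A →ₗ[K] V →ₗ[K] V) (rV : V →ₗ[K] A →ₗ[K] V)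
    -- BiHom-associative algebra axioms for (A, ·, αA, βA)
    (hαβ : ∀ a, αA (βA a) = βA (αA a))
    (hαmul : ∀ a b, αA (a * b) = αA a * αA b)
    (hβmul : ∀ a b, βA (a * b) = βA a * βA b)
    (hassoc : ∀ a b c, αA a * (b * c) = (a * b) * βA c)
    -- ψA, ωA multiplicative, and any two of αA, βA, ψA, ωA commute
    (hψmul : ∀ a b, ψA (a * b) = ψA a * ψA b)
    (hωmul : ∀ a b, ωA (a * b) = ωA a * ωA b)
    (hc1 : ∀ a, αA (βA a) = βA (αA a)) (hc2 : ∀ a, αA (ψA a) = ψA (αA a))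
    (hc3 : ∀ a, αA (ωA a) = ωA (αA a)) (hc4 : ∀ a, βA (ψA a) = ψA (βA a))
    (hc5 : ∀ a, βA (ωA a) = ωA (βA a)) (hc6 : ∀ a, ψA (ωA a) = ωA (ψA a))
    -- M is an (A, μ, αA, βA)-bimodule
    (hMc : ∀ m, αM (βM m) = βM (αM m))
    (hMlα : ∀ a m, αM (lM a m) = lM (αA a) (αM m))
    (hMlβ : ∀ a m, βM (lM a m) = lM (βA a) (βM m))
    (hMl : ∀ a b m, lM (αA a) (lM b m) = lM (a * b) (βM m))
    (hMrα : ∀ a m, αM (rM m a) = rM (αM m) (αA a))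
    (hMrβ : ∀ a m, βM (rM m a) = rM (βM m) (βA a))
    (hMr : ∀ a b m, rM (αM m) (a * b) = rM (rM m a) (βA b))
    (hMlr : ∀ a b m, lM (αA a) (rM m b) = rM (lM a m) (βA b))
    -- N is an (A, μ, αA, βA)-bimodule
    (hNc : ∀ n, αN (βN n) = βN (αN n))
    (hNlα : ∀ a n, αN (lN a n) = lN (αA a) (αN n))
    (hNlβ : ∀ a n, βN (lN a n) = lN (βA a) (βN n))
    (hNl : ∀ a b n, lN (αA a) (lN b n) = lN (a * b) (βN n))
    (hNrα : ∀ a n, αN (rN n a) = rN (αN n) (αA a))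
    (hNrβ : ∀ a n, βN (rN n a) = rN (βN n) (βA a))
    (hNr : ∀ a b n, rN (αN n) (a * b) = rN (rN n a) (βA b))
    (hNlr : ∀ a b n, lN (αA a) (rN n b) = rN (lN a n) (βA b))
    -- V is an (A, μ, αA, βA)-bimodule
    (hVc : ∀ v, αV (βV v) = βV (αV v))
    (hVlα : ∀ a v, αV (lV a v) = lV (αA a) (αV v))
    (hVlβ : ∀ a v, βV (lV a v) = lV (βA a) (βV v))
    (hVl : ∀ a b v, lV (αA a) (lV b v) = lV (a * b) (βV v))
    (hVrα : ∀ a v, αV (rV v a) = rV (αV v) (αA a))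
    (hVrβ : ∀ a v, βV (rV v a) = rV (βV v) (βA a))
    (hVr : ∀ a b v, rV (αV v) (a * b) = rV (rV v a) (βA b))
    (hVlr : ∀ a b v, lV (αA a) (rV v b) = rV (lV a v) (βA b)) :
    -- conclusion: M⊗N⊗V is an (A, μ, αA, βA)-bimodule
    -- the actions are bilinear
    (∀ a b t, lact3 ωA lM βN βV (a + b) t = lact3 ωA lM βN βV a t + lact3 ωA lM βN βV b t) ∧
    (∀ (c : K) a t, lact3 ωA lM βN βV (c • a) t = c • lact3 ωA lM βN βV a t) ∧
    (∀ a b t, ract3 ψA αM αN rV (a + b) t = ract3 ψA αM αN rV a t + ract3 ψA αM αN rV b t) ∧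
    (∀ (c : K) a t, ract3 ψA αM αN rV (c • a) t = c • ract3 ψA αM αN rV a t) ∧
    -- the structure maps commute
    (∀ t : M ⊗[K] (N ⊗[K] V),
      TensorProduct.map αM (TensorProduct.map αN αV)
          (TensorProduct.map βM (TensorProduct.map βN βV) t) =
        TensorProduct.map βM (TensorProduct.map βN βV)
          (TensorProduct.map αM (TensorProduct.map αN αV) t)) ∧
    -- left module axioms
    (∀ a t, TensorProduct.map αM (TensorProduct.map αN αV) (lact3 ωA lM βN βV a t) =
      lact3 ωA lM βN βV (αA a) (TensorProduct.map αM (TensorProduct.map αN αV) t)) ∧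
    (∀ a t, TensorProduct.map βM (TensorProduct.map βN βV) (lact3 ωA lM βN βV a t) =
      lact3 ωA lM βN βV (βA a) (TensorProduct.map βM (TensorProduct.map βN βV) t)) ∧
    (∀ a b t, lact3 ωA lM βN βV (αA a) (lact3 ωA lM βN βV b t) =
      lact3 ωA lM βN βV (a * b) (TensorProduct.map βM (TensorProduct.map βN βV) t)) ∧
    -- right module axioms
    (∀ a t, TensorProduct.map αM (TensorProduct.map αN αV) (ract3 ψA αM αN rV a t) =
      ract3 ψA αM αN rV (αA a) (TensorProduct.map αM (TensorProduct.map αN αV) t)) ∧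
    (∀ a t, TensorProduct.map βM (TensorProduct.map βN βV) (ract3 ψA αM αN rV a t) =
      ract3 ψA αM αN rV (βA a) (TensorProduct.map βM (TensorProduct.map βN βV) t)) ∧
    (∀ a b t, ract3 ψA αM αN rV (a * b) (TensorProduct.map αM (TensorProduct.map αN αV) t) =
      ract3 ψA αM αN rV (βA b) (ract3 ψA αM αN rV a t)) ∧
    -- bimodule compatibility
    (∀ a b t, lact3 ωA lM βN βV (αA a) (ract3 ψA αM αN rV b t) =
      ract3 ψA αM αN rV (βA b) (lact3 ωA lM βN βV a t)) := by
  have ext3 : ∀ (f f' g g' : M ⊗[K] (N ⊗[K] V) →ₗ[K] M ⊗[K] (N ⊗[K] V)),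
      (∀ m n v, f (f' (m ⊗ₜ (n ⊗ₜ v))) = g (g' (m ⊗ₜ (n ⊗ₜ v)))) →
      ∀ t, f (f' t) = g (g' t) := by
    intro f f' g g' h t
    have : f ∘ₗ f' = g ∘ₗ g' := by
      apply TensorProduct.ext
      ext m : 1
      apply TensorProduct.ext'
      intro n v
      exact h m n v
    exact LinearMap.congr_fun this t
  refine ⟨?_, ?_, ?_, ?_, ?_, ?_, ?_, ?_, ?_, ?_, ?_, ?_⟩
  · intro a b t
    simp [lact3, TensorProduct.map_add_left]
  · intro c a t
    simp [lact3, TensorProduct.map_smul_left]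
  · intro a b t
    simp [ract3, TensorProduct.map_add_right]
  · intro c a t
    simp [ract3, TensorProduct.map_smul_right]
  · intro t
    refine ext3 _ _ _ _ (fun m n v => ?_) t
    simp [hMc, hNc, hVc]
  · intro a t
    refine ext3 _ _ _ _ (fun m n v => ?_) t
    simp [lact3, hMlα, hNc, hVc, hc3]
  · intro a t
    refine ext3 _ _ _ _ (fun m n v => ?_) t
    simp [lact3, hMlβ, hc5]
  · intro a b t
    refine ext3 _ _ _ _ (fun m n v => ?_) t
    simp [lact3, ← hc3, hMl, hωmul]
  · intro a t
    refine ext3 _ _ _ _ (fun m n v => ?_) t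
    simp [ract3, hVrα, hc2]
  · intro a t
    refine ext3 _ _ _ _ (fun m n v => ?_) t
    simp [ract3, hVrβ, hc4, hMc, hNc]
  · intro a b t
    refine ext3 _ _ _ _ (fun m n v => ?_) t
    simp [ract3, hVr, hψmul, hc4]
  · intro a b t
    refine ext3 _ _ _ _ (fun m n v => ?_) t
    simp [lact3, ract3, hMlα, hVrβ, hc3, hc4, hNc]
end
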